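/- arXiv:1212.6540 — 2 statements merged into one kernel-verified Lean document; each statement's English description precedes it below -/
import Mathlib

section
/- Let n ∈ ℕ and let L be an O-submodule of 𝔤 with pⁿL₀ ⊆ L ⊆ p⁻ⁿL₀ and L^♯ = L. Then d(L / pⁿL₀) = nN and d(p⁻ⁿL₀ / L) = nN. -/
noncomputable section

open scoped Pointwise

/-- The length `d(Z)` of a module, i.e. the Krull dimension of its lattice of submodules. -/
def modLength (R M : Type*) [Ring R] [AddCommGroup M] [Module R M] : WithBot ℕ∞ :=
  Order.krullDim (Submodule R M)

/-!
Write `D` for the dual lattice and put `A = pⁿL₀`, so that `D A = p⁻ⁿL₀`. Duality is an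
order-reversing bijection from the lattices between `A` and `L` onto those between `D L = L` and
`D A`, so `L / A` and `D A / L` have the same length, namely half that of `D A / A`. The last number
does not depend on the self-dual lattice `L`, hence `L / A` has the same length as
`L₀ / A = L₀ / pⁿL₀`, which is `n` times the rank of `L₀`.
-/

theorem modLength_eq_coe_length (R M : Type*) [Ring R] [AddCommGroup M] [Module R M] :
    modLength R M = Module.length R M :=
  (Module.coe_length R M).symm

section Subquotient

variable {R V : Type*} [Ring R] [AddCommGroup V] [Module R V] {A L B : Submodule R V}

theorem comap_map_mkQ_of_le (hAB : A ≤ B) : (B.map A.mkQ).comap A.mkQ = B := by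
  rw [Submodule.comap_map_mkQ, sup_eq_right.2 hAB]

theorem coe_length_map_mkQ_eq_krullDim_Icc (hAB : A ≤ B) :
    (Module.length R (B.map A.mkQ) : WithBot ℕ∞) = Order.krullDim (Set.Icc A B) := by
  let correspondence : Set.Iic (B.map A.mkQ) ≃o Set.Icc A B :=
    { toFun := fun N ↦ ⟨N.1.comap A.mkQ, Submodule.le_comap_mkQ A _,
        (Submodule.comap_mono N.2).trans (comap_map_mkQ_of_le hAB).le⟩
      invFun := fun M ↦ ⟨M.1.map A.mkQ, Submodule.map_mono M.2.2⟩
      left_inv := fun N ↦ Subtype.ext <|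
        Submodule.map_comap_eq_of_surjective A.mkQ_surjective N.1
      right_inv := fun M ↦ Subtype.ext <| comap_map_mkQ_of_le M.2.1
      map_rel_iff' := Submodule.comap_le_comap_iff_of_surjective A.mkQ_surjective }
  rw [Module.coe_length]
  exact Order.krullDim_eq_of_orderIso ((Submodule.mapIic _).trans correspondence)

theorem length_map_mkQ_eq_add (hAL : A ≤ L) (hLB : L ≤ B) :
    Module.length R (B.map A.mkQ) =
      Module.length R (L.map A.mkQ) + Module.length R (B.map L.mkQ) := by
  have map_factor : (B.map A.mkQ).map (Submodule.factor hAL) = B.map L.mkQ := by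
    rw [← Submodule.map_comp, Submodule.factor_comp_mk]
  let incl := Submodule.inclusion (Submodule.map_mono (f := A.mkQ) hLB)
  let proj : B.map A.mkQ →ₗ[R] B.map L.mkQ :=
    (Submodule.factor hAL).restrict fun _ hx ↦ map_factor.le ⟨_, hx, rfl⟩
  have proj_surjective : Function.Surjective proj := by
    rintro ⟨_, b, hb, rfl⟩
    exact ⟨⟨A.mkQ b, b, hb, rfl⟩, rfl⟩
  have exact_incl_proj : Function.Exact incl proj := by
    rintro ⟨_, b, hb, rfl⟩
    calc proj ⟨A.mkQ b, b, hb, rfl⟩ = 0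
      _ ↔ b ∈ L := Subtype.ext_iff.trans (Submodule.Quotient.mk_eq_zero L)
      _ ↔ A.mkQ b ∈ L.map A.mkQ := by rw [← Submodule.mem_comap, comap_map_mkQ_of_le hAL]
      _ ↔ ⟨A.mkQ b, b, hb, rfl⟩ ∈ Set.range incl := by simp [incl, Subtype.ext_iff]
  exact Module.length_eq_add_of_exact incl proj (Submodule.inclusion_injective _) proj_surjective
    exact_incl_proj

end Subquotient

section SmulQuotient

variable {R : Type*} [CommRing R]

theorem length_quotSMulTop_of_free [StrongRankCondition R] (M : Type*) [AddCommGroup M] [Module R M]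
    [Module.Free R M] [Module.Finite R M] (c : R) :
    Module.length R (QuotSMulTop c M) = Module.finrank R M * Ring.ord R c := by
  let b := Module.Free.chooseBasis R M
  let e := (QuotSMulTop.equivQuotTensor c M).trans <|
    (b.repr.lTensor (R ⧸ Ideal.span {c})).trans (TensorProduct.finsuppScalarRight R R _ _)
  rw [e.length_eq, Module.length_finsupp, Module.finrank_eq_card_basis b, Ring.ord,
    ENat.card_eq_coe_fintype_card]

theorem length_map_mkQ_smul {V : Type*} [AddCommGroup V] [Module R V] [StrongRankCondition R]
    (M : Submodule R V) [Module.Free R M] [Module.Finite R M] (c : R) :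
    Module.length R (M.map (c • M).mkQ) = Module.finrank R M * Ring.ord R c := by
  have ker_eq : LinearMap.ker ((c • M).mkQ.domRestrict M) = c • (⊤ : Submodule R M) := by
    ext x
    simp [Submodule.mem_smul_pointwise_iff_exists, Subtype.ext_iff]
  have range_eq : LinearMap.range ((c • M).mkQ.domRestrict M) = M.map (c • M).mkQ :=
    LinearMap.range_domRestrict _ _
  rw [← length_quotSMulTop_of_free M c, ← range_eq,
    ← ((c • M).mkQ.domRestrict M).quotKerEquivRange.length_eq, ker_eq]

end SmulQuotient

section IsLattice

variable {R S V : Type*} [CommRing R] [CommRing S] [Algebra R S] [AddCommGroup V] [Module R V]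
  [Module S V] [IsScalarTower R S V]

theorem isLattice_of_le_of_le [IsNoetherianRing R] {A M B : Submodule R V} [A.IsLattice S]
    [B.IsLattice S] (hAM : A ≤ M) (hMB : M ≤ B) : M.IsLattice S :=
  have : IsNoetherian R M := isNoetherian_of_le hMB
  .of_le_of_isLattice_of_fg S hAM (Module.Finite.iff_fg.1 inferInstance)

theorem isLattice_smul (M : Submodule R V) [M.IsLattice S] {c : R}
    (hc : IsUnit (algebraMap R S c)) : (c • M).IsLattice S := by
  obtain ⟨u, hu⟩ := hc
  have unit_smul_eq (x : V) : u • x = c • x := by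
    rw [Units.smul_def, hu, algebraMap_smul]
  have smul_eq : c • M = u • M :=
    SetLike.coe_injective (Set.image_congr fun x _ ↦ (unit_smul_eq x).symm)
  rw [smul_eq]
  infer_instance

theorem span_range_extendOfIsLattice {K κ : Type*} [Field K] [Algebra R K] [IsFractionRing R K]
    [Module K V] [IsScalarTower R K V] {M : Submodule R V} [M.IsLattice K]
    (b : Module.Basis κ R M) : Submodule.span R (Set.range (b.extendOfIsLattice K)) = M := by
  have range_eq : Set.range (b.extendOfIsLattice K) = M.subtype '' Set.range b := by
    rw [← Set.range_comp]
    exact congrArg Set.range (funext (b.extendOfIsLattice_apply K))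
  rw [range_eq, ← Submodule.map_span, b.span_eq, Submodule.map_top, Submodule.range_subtype]

end IsLattice

open LinearMap (BilinForm)

section DualSubmodule

variable {R S M : Type*} [CommRing R] [Field S] [AddCommGroup M] [Algebra R S] [Module R M]
  [Module S M] [IsScalarTower R S M] (F : BilinForm S M)

theorem dualSubmodule_anti {N₁ N₂ : Submodule R M} (h : N₁ ≤ N₂) :
    F.dualSubmodule N₂ ≤ F.dualSubmodule N₁ :=
  fun _ hx y hy ↦ hx y (h hy)

theorem coe_dualSubmodule (N : Submodule R M) :
    (F.dualSubmodule N : Set M) = {x | ∀ y ∈ N, F x y ∈ (algebraMap R S).range} := by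
  ext x
  simp [BilinForm.mem_dualSubmodule]

theorem dualSubmodule_smul (c : R) (N : Submodule R M) :
    F.dualSubmodule (c • N) = (F.dualSubmodule N).comap (LinearMap.lsmul R M c) := by
  ext x
  have apply_smul_comm (y : M) : F x (c • y) = F (c • x) y := by
    rw [← algebraMap_smul S c y, ← algebraMap_smul S c x, map_smul, map_smul, LinearMap.smul_apply]
  simp [Submodule.mem_smul_pointwise_iff_exists, BilinForm.mem_dualSubmodule, apply_smul_comm]

end DualSubmodule

section DualLattice

variable {R K V : Type*} [CommRing R] [IsDomain R] [IsPrincipalIdealRing R] [Field K] [Algebra R K]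
  [IsFractionRing R K] [AddCommGroup V] [Module R V] [Module K V] [IsScalarTower R K V]
  {F : BilinForm K V}

theorem flip_dualSubmodule_dualSubmodule (hF : F.Nondegenerate) (M : Submodule R V)
    [M.IsLattice K] : F.flip.dualSubmodule (F.dualSubmodule M) = M := by
  have := BilinForm.dualSubmodule_flip_dualSubmodule_of_basis (R := R) F hF
    ((Module.Free.chooseBasis R M).extendOfIsLattice K)
  rwa [span_range_extendOfIsLattice] at this

theorem dualSubmodule_flip_dualSubmodule (hF : F.Nondegenerate) (M : Submodule R V)
    [M.IsLattice K] : F.dualSubmodule (F.flip.dualSubmodule M) = M :=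
  flip_dualSubmodule_dualSubmodule hF.flip M

theorem isLattice_dualSubmodule (hF : F.Nondegenerate) (M : Submodule R V) [M.IsLattice K] :
    (F.dualSubmodule M).IsLattice K := by
  classical
  let b := (Module.Free.chooseBasis R M).extendOfIsLattice K
  have : FiniteDimensional K V := b.finiteDimensional_of_finite
  have dual_eq : F.dualSubmodule M = Submodule.span R (Set.range (F.dualBasis hF b)) := by
    rw [← BilinForm.dualSubmodule_span_of_basis, span_range_extendOfIsLattice]
  rw [dual_eq]
  refine ⟨Submodule.fg_span (Set.finite_range _), ?_⟩
  rw [Submodule.span_span_of_tower, (F.dualBasis hF b).span_eq]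

theorem length_map_mkQ_dualSubmodule (hF : F.Nondegenerate) {A B : Submodule R V}
    [A.IsLattice K] [B.IsLattice K] (hAB : A ≤ B) :
    Module.length R ((F.dualSubmodule A).map (F.dualSubmodule B).mkQ) =
      Module.length R (B.map A.mkQ) := by
  have := isLattice_dualSubmodule hF A
  have := isLattice_dualSubmodule hF B
  have flip_dual_dual (M : Set.Icc A B) : F.flip.dualSubmodule (F.dualSubmodule M.1) = M :=
    have := isLattice_of_le_of_le (S := K) M.2.1 M.2.2
    flip_dualSubmodule_dualSubmodule hF M.1
  have dual_flip_dual (N : Set.Icc (F.dualSubmodule B) (F.dualSubmodule A)) :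
      F.dualSubmodule (F.flip.dualSubmodule N.1) = N :=
    have := isLattice_of_le_of_le (S := K) N.2.1 N.2.2
    dualSubmodule_flip_dualSubmodule hF N.1
  let duality : (Set.Icc A B)ᵒᵈ ≃o Set.Icc (F.dualSubmodule B) (F.dualSubmodule A) :=
    { toFun := fun M ↦ ⟨F.dualSubmodule M.ofDual.1, dualSubmodule_anti F M.ofDual.2.2,
        dualSubmodule_anti F M.ofDual.2.1⟩
      invFun := fun N ↦ .toDual ⟨F.flip.dualSubmodule N.1,
        F.le_flip_dualSubmodule.2 N.2.2,
        (dualSubmodule_anti F.flip N.2.1).trans (flip_dualSubmodule_dualSubmodule hF B).le⟩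
      left_inv := fun M ↦ Subtype.ext (flip_dual_dual M.ofDual)
      right_inv := fun N ↦ Subtype.ext (dual_flip_dual N)
      map_rel_iff' := fun {M N} ↦ by
        change F.dualSubmodule M.ofDual.1 ≤ F.dualSubmodule N.ofDual.1 ↔ N.ofDual.1 ≤ M.ofDual.1
        rw [← F.le_flip_dualSubmodule, flip_dual_dual] }
  apply WithBot.coe_injective
  rw [coe_length_map_mkQ_eq_krullDim_Icc hAB,
    coe_length_map_mkQ_eq_krullDim_Icc (dualSubmodule_anti F hAB),
    ← Order.krullDim_orderDual (α := Set.Icc A B), Order.krullDim_eq_of_orderIso duality]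

variable {A L : Submodule R V} [A.IsLattice K]

theorem isLattice_of_dualSubmodule_eq_self (hF : F.Nondegenerate)
    (hL : F.dualSubmodule L = L) (hAL : A ≤ L) : L.IsLattice K :=
  have := isLattice_dualSubmodule hF A
  isLattice_of_le_of_le hAL (hL.ge.trans (dualSubmodule_anti F hAL))

theorem length_dualSubmodule_map_mkQ_of_dualSubmodule_eq_self (hF : F.Nondegenerate)
    (hL : F.dualSubmodule L = L) (hAL : A ≤ L) :
    Module.length R ((F.dualSubmodule A).map L.mkQ) = Module.length R (L.map A.mkQ) := by
  have := isLattice_of_dualSubmodule_eq_self hF hL hAL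
  have := length_map_mkQ_dualSubmodule hF hAL
  rwa [hL] at this

theorem two_mul_length_map_mkQ_of_dualSubmodule_eq_self (hF : F.Nondegenerate)
    (hL : F.dualSubmodule L = L) (hAL : A ≤ L) :
    2 * Module.length R (L.map A.mkQ) = Module.length R ((F.dualSubmodule A).map A.mkQ) := by
  rw [length_map_mkQ_eq_add hAL (hL.ge.trans (dualSubmodule_anti F hAL)),
    length_dualSubmodule_map_mkQ_of_dualSubmodule_eq_self hF hL hAL, two_mul]

theorem length_map_mkQ_eq_of_dualSubmodule_eq_self (hF : F.Nondegenerate) {M : Submodule R V}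
    (hL : F.dualSubmodule L = L) (hAL : A ≤ L) (hM : F.dualSubmodule M = M) (hAM : A ≤ M) :
    Module.length R (L.map A.mkQ) = Module.length R (M.map A.mkQ) := by
  apply (ENat.mul_right_strictMono two_ne_zero (ENat.natCast_ne_top 2)).injective
  exact (two_mul_length_map_mkQ_of_dualSubmodule_eq_self hF hL hAL).trans
    (two_mul_length_map_mkQ_of_dualSubmodule_eq_self hF hM hAM).symm

end DualLattice

theorem statement9_general
    {R K V : Type*} [CommRing R] [IsDomain R] [IsPrincipalIdealRing R]
    [Field K] [Algebra R K] [IsFractionRing R K]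
    [AddCommGroup V] [Module R V] [Module K V] [IsScalarTower R K V]
    {F : BilinForm K V} (hF : F.Nondegenerate)
    {L₀ : Submodule R V} [L₀.IsLattice K] (hL₀ : F.dualSubmodule L₀ = L₀)
    {c : R} (hc : c ≠ 0) {L : Submodule R V} (hcL : c • L₀ ≤ L) (hL : F.dualSubmodule L = L) :
    modLength R (L.map (c • L₀).mkQ) = (Module.finrank K V * Ring.ord R c : ℕ∞) ∧
    modLength R ((L₀.comap (LinearMap.lsmul R V c)).map L.mkQ) =
      (Module.finrank K V * Ring.ord R c : ℕ∞) := by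
  have : (c • L₀).IsLattice K := isLattice_smul L₀ (by simpa using hc)
  have dual_smul : F.dualSubmodule (c • L₀) = L₀.comap (LinearMap.lsmul R V c) := by
    rw [dualSubmodule_smul, hL₀]
  have finrank_eq : Module.finrank R L₀ = Module.finrank K V :=
    congrArg Cardinal.toNat (Submodule.IsLattice.rank' K L₀)
  have length_lower : Module.length R (L.map (c • L₀).mkQ) = Module.finrank K V * Ring.ord R c := by
    rw [length_map_mkQ_eq_of_dualSubmodule_eq_self hF hL hcL hL₀
      (Submodule.smul_le_self_of_tower c L₀), length_map_mkQ_smul, finrank_eq]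
  rw [modLength_eq_coe_length, modLength_eq_coe_length, ← dual_smul,
    length_dualSubmodule_map_mkQ_of_dualSubmodule_eq_self hF hL hcL, length_lower, and_self]

theorem statement9
    (p : ℕ) [Fact p.Prime]
    (k : Type*) [Field k] [IsAlgClosed k] [CharP k p]
    (K : Type*) [Field K] [Algebra (WittVector p k) K] [IsFractionRing (WittVector p k) K]
    (𝔤 : Type*) [LieRing 𝔤] [LieAlgebra K 𝔤] [FiniteDimensional K 𝔤]
    [Module (WittVector p k) 𝔤] [IsScalarTower (WittVector p k) K 𝔤]
    (hnd : (killingForm K 𝔤).Nondegenerate)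
    (L₀ : Submodule (WittVector p k) 𝔤) (hfg : L₀.FG)
    (hspan : Submodule.span K (L₀ : Set 𝔤) = ⊤)
    (hbr : ∀ x ∈ L₀, ∀ y ∈ L₀, ⁅x, y⁆ ∈ L₀)
    (hself : {x : 𝔤 | ∀ y ∈ L₀, killingForm K 𝔤 x y ∈ (algebraMap (WittVector p k) K).range}
      = (L₀ : Set 𝔤))
    (n : ℕ) (L : Submodule (WittVector p k) 𝔤)
    (hL1 : (p : WittVector p k) ^ n • L₀ ≤ L)
    (hL2 : L ≤ L₀.comap (LinearMap.lsmul (WittVector p k) 𝔤 ((p : WittVector p k) ^ n)))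
    (hLsharp : {x : 𝔤 | ∀ y ∈ L, killingForm K 𝔤 x y ∈ (algebraMap (WittVector p k) K).range}
      = (L : Set 𝔤)) :
    modLength (WittVector p k) ↥(Submodule.map ((p : WittVector p k) ^ n • L₀).mkQ L)
      = (n * Module.finrank K 𝔤 : ℕ) ∧
    modLength (WittVector p k)
      ↥(Submodule.map L.mkQ
          (L₀.comap (LinearMap.lsmul (WittVector p k) 𝔤 ((p : WittVector p k) ^ n))))
      = (n * Module.finrank K 𝔤 : ℕ) := by
  have : L₀.IsLattice K := ⟨hfg, hspan⟩
  have hp := WittVector.irreducible p (k := k)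
  simpa [IsDiscreteValuationRing.addVal_uniformizer hp, mul_comm] using
    statement9_general hnd (SetLike.coe_injective ((coe_dualSubmodule _ L₀).trans hself))
      (pow_ne_zero n hp.ne_zero) hL1
      (SetLike.coe_injective ((coe_dualSubmodule _ L).trans hLsharp))
end
end

section
/- Let n ∈ ℕ and let L be an O-submodule of 𝔤 with pⁿL₀ ⊆ L ⊆ p⁻ⁿL₀ such that d(L / pⁿL₀) = nN and κ(x,y) ∈ O for all x, y ∈ L. Then L^♯ = L. -/
noncomputable section

open scoped Pointwise

/-!
Suppose `A` is a lattice with `A ≤ L ≤ L^♯`. Then `A ≤ L ≤ L^♯ ≤ A^♯`, and since `♯` reverses the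
lattice of intermediate modules, `d(A^♯ / L^♯) = d(L / A)`, so
`d(A^♯ / A) = 2 d(L / A) + d(L^♯ / L)`. The left side does not depend on `L`. Comparing the
identities for `L` and for the self-dual `L₀` with `A = c L₀` and `d(L / A) = d(L₀ / A) < ∞` gives
`d(L^♯ / L) = 0`.
-/

section RelativeLength

variable {R M : Type*} [Ring R] [AddCommGroup M] [Module R M] {A B C : Submodule R M}

/-- The relative length `d(B / A)` of submodules, meant for `A ≤ B`. As `B / A` is encoded as the
image of `B` in `M ⧸ A`, the value for general `A` and `B` is `d((A + B) / A)`. -/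
def relLength (A B : Submodule R M) : ℕ∞ :=
  Module.length R (B.map A.mkQ)

lemma relLength_eq_length_quotient (A B : Submodule R M) :
    relLength A B = Module.length R (B ⧸ A.submoduleOf B) := by
  have ker_eq : (A.mkQ.submoduleMap B).ker = A.submoduleOf B := by
    rw [LinearMap.ker_submoduleMap, Submodule.ker_mkQ, Submodule.submoduleOf]
  rw [← ker_eq]
  exact ((A.mkQ.submoduleMap B).quotKerEquivOfSurjective
    (A.mkQ.submoduleMap_surjective B)).symm.length_eq

lemma coe_relLength_eq_krullDim_Icc (hAB : A ≤ B) :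
    (relLength A B : WithBot ℕ∞) = Order.krullDim (Set.Icc A B) := by
  let e : Set.Iic (⟨B, hAB⟩ : Set.Ici A) ≃o Set.Icc A B :=
    { toFun := fun Z ↦ ⟨Z.1.1, Z.1.2, Z.2⟩
      invFun := fun Z ↦ ⟨⟨Z.1, Z.2.1⟩, Z.2.2⟩
      map_rel_iff' := Iff.rfl }
  have map_eq : Submodule.comapMkQRelIso A (B.map A.mkQ) = ⟨B, hAB⟩ :=
    Subtype.ext (by simpa [Submodule.comapMkQRelIso] using hAB)
  rw [relLength, Module.length_submodule, ← Order.height_orderIso (Submodule.comapMkQRelIso A),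
    map_eq, Order.height_eq_krullDim_Iic, Order.krullDim_eq_of_orderIso e]

lemma relLength_add_relLength (hAB : A ≤ B) (hBC : B ≤ C) :
    relLength A B + relLength B C = relLength A C := by
  have factor_mem : ∀ x ∈ C.map A.mkQ, Submodule.factor hAB x ∈ C.map B.mkQ := by
    rintro _ ⟨x, hx, rfl⟩
    exact ⟨x, hx, rfl⟩
  refine (Module.length_eq_add_of_exact
    (Submodule.inclusion (Submodule.map_mono (f := A.mkQ) hBC))
    ((Submodule.factor hAB).restrict factor_mem) (Submodule.inclusion_injective _) ?_ ?_).symm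
  · rintro ⟨_, x, hx, rfl⟩
    exact ⟨⟨A.mkQ x, x, hx, rfl⟩, rfl⟩
  · rintro ⟨_, x, hx, rfl⟩
    have factor_eq_zero_iff : Submodule.factor hAB (A.mkQ x) = 0 ↔ A.mkQ x ∈ B.map A.mkQ := by
      rw [← Submodule.mem_comap, Submodule.comap_map_mkQ, sup_eq_right.2 hAB]
      exact Submodule.Quotient.mk_eq_zero B
    simpa [Subtype.ext_iff] using factor_eq_zero_iff

lemma relLength_self (A : Submodule R M) : relLength A A = 0 := by
  rw [relLength, Submodule.mkQ_map_self, Module.length_bot]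

lemma le_of_relLength_eq_zero (h : relLength A B = 0) : B ≤ A := by
  rwa [relLength, Module.length_eq_zero_iff, Submodule.subsingleton_iff_eq_bot,
    ← LinearMap.le_ker_iff_map, Submodule.ker_mkQ] at h

end RelativeLength

section SMul

variable {R M : Type*} [CommRing R] [StrongRankCondition R] [AddCommGroup M] [Module R M]

lemma length_quotSMulTop [Module.Free R M] [Module.Finite R M] (c : R) :
    Module.length R (QuotSMulTop c M) = Module.finrank R M * Ring.ord R c := by
  have e : QuotSMulTop c M ≃ₗ[R] Fin (Module.finrank R M) →₀ R ⧸ Ideal.span {c} :=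
    QuotSMulTop.equivTensorQuot c M ≪≫ₗ
      TensorProduct.equivFinsuppOfBasisLeft (Module.finBasis R M)
  rw [e.length_eq, Module.length_finsupp, ENat.card_eq_coe_fintype_card, Fintype.card_fin,
    Ring.ord]

lemma relLength_smul_self (c : R) (L : Submodule R M) [Module.Free R L] [Module.Finite R L] :
    relLength (c • L) L = Module.finrank R L * Ring.ord R c := by
  have submoduleOf_eq : (c • L).submoduleOf L = c • (⊤ : Submodule R L) := by
    ext x
    simp [Submodule.submoduleOf, Submodule.mem_smul_pointwise_iff_exists, Subtype.ext_iff]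
  rw [relLength_eq_length_quotient, submoduleOf_eq]
  exact length_quotSMulTop c

end SMul

section DualLattice

open LinearMap.BilinForm Submodule

variable {R K V : Type*} [CommRing R] [Field K] [Algebra R K] [AddCommGroup V] [Module K V]
  [Module R V] [IsScalarTower R K V] {B : LinearMap.BilinForm K V} {A L L₀ X Y Z : Submodule R V}

lemma coe_dualSubmodule_s10 (B : LinearMap.BilinForm K V) (L : Submodule R V) :
    (B.dualSubmodule L : Set V) = {x | ∀ y ∈ L, B x y ∈ (algebraMap R K).range} := by
  ext x
  simp [mem_dualSubmodule, Submodule.mem_one]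

lemma dualSubmodule_antitone (B : LinearMap.BilinForm K V) :
    Antitone (B.dualSubmodule : Submodule R V → Submodule R V) :=
  fun _ _ h _ hx y hy ↦ hx y (h hy)

lemma isLattice_of_le_of_le_s10 [IsNoetherianRing R] [IsLattice K X] [IsLattice K Y]
    (hXZ : X ≤ Z) (hZY : Z ≤ Y) : IsLattice K Z :=
  have : IsNoetherian R Z := isNoetherian_of_le hZY
  .of_le_of_isLattice_of_fg K hXZ (Module.Finite.iff_fg.1 inferInstance)

variable [IsFractionRing R K]

lemma isLattice_smul_s10 [IsLattice K L] {c : R} (hc : c ≠ 0) : IsLattice K (c • L) := by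
  have hcK : algebraMap R K c ≠ 0 := by rwa [Ne, FaithfulSMul.algebraMap_eq_zero_iff]
  have smul_eq : c • L = Units.mk0 (algebraMap R K c) hcK • L := by
    ext x
    simp [mem_smul_pointwise_iff_exists, Units.smul_def]
  rw [smul_eq]
  infer_instance

variable [IsDomain R] [IsPrincipalIdealRing R]

variable (K) in
lemma exists_basis_span_eq_of_isLattice (L : Submodule R V) [IsLattice K L] :
    ∃ b : Module.Basis (Fin (Module.finrank R L)) K V, span R (Set.range b) = L := by
  refine ⟨(Module.finBasis R L).extendOfIsLattice K, ?_⟩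
  have coe_eq : ⇑((Module.finBasis R L).extendOfIsLattice K) = L.subtype ∘ Module.finBasis R L := by
    ext i
    simp
  rw [coe_eq, Set.range_comp, ← map_span, Module.Basis.span_eq, Submodule.map_top, range_subtype]

lemma isLattice_dualSubmodule_s10 (hB : B.Nondegenerate) (L : Submodule R V) [IsLattice K L] :
    IsLattice K (B.dualSubmodule L) := by
  obtain ⟨b, hb⟩ := exists_basis_span_eq_of_isLattice K L
  have : FiniteDimensional K V := b.finiteDimensional_of_finite
  rw [← hb, dualSubmodule_span_of_basis B hB b]
  exact ⟨fg_span (Set.finite_range _), by rw [span_span_of_tower, Module.Basis.span_eq]⟩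

lemma dualSubmodule_dualSubmodule_of_isLattice (hB : B.Nondegenerate) (hs : B.IsSymm)
    (L : Submodule R V) [IsLattice K L] : B.dualSubmodule (B.dualSubmodule L) = L := by
  obtain ⟨b, hb⟩ := exists_basis_span_eq_of_isLattice K L
  rw [← hb, dualSubmodule_dualSubmodule_of_basis B hB hs b]

lemma relLength_le_relLength_dualSubmodule (hB : B.Nondegenerate) (hs : B.IsSymm)
    [IsLattice K X] [IsLattice K Y] (hXY : X ≤ Y) :
    relLength X Y ≤ relLength (B.dualSubmodule Y) (B.dualSubmodule X) := by
  rw [← WithBot.coe_le_coe, coe_relLength_eq_krullDim_Icc hXY,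
    coe_relLength_eq_krullDim_Icc (dualSubmodule_antitone B hXY),
    ← Order.krullDim_orderDual (α := Set.Icc (B.dualSubmodule Y) (B.dualSubmodule X))]
  let dualIcc (Z : Set.Icc X Y) : (Set.Icc (B.dualSubmodule Y) (B.dualSubmodule X))ᵒᵈ :=
    .toDual ⟨B.dualSubmodule Z, dualSubmodule_antitone B Z.2.2, dualSubmodule_antitone B Z.2.1⟩
  have monotone_dualIcc : Monotone dualIcc := fun _ _ h ↦ dualSubmodule_antitone B h
  have dual_dual (Z : Set.Icc X Y) : B.dualSubmodule (B.dualSubmodule Z.1) = Z :=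
    have : IsLattice K Z.1 := isLattice_of_le_of_le_s10 Z.2.1 Z.2.2
    dualSubmodule_dualSubmodule_of_isLattice hB hs Z.1
  have injective_dualIcc : Function.Injective dualIcc := fun Z W h ↦ by
    have dual_eq : B.dualSubmodule Z.1 = B.dualSubmodule W.1 := congrArg (·.ofDual.1) h
    exact Subtype.ext (by rw [← dual_dual Z, dual_eq, dual_dual W])
  exact Order.krullDim_le_of_strictMono dualIcc
    (monotone_dualIcc.strictMono_of_injective injective_dualIcc)

lemma relLength_dualSubmodule (hB : B.Nondegenerate) (hs : B.IsSymm)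
    [IsLattice K X] [IsLattice K Y] (hXY : X ≤ Y) :
    relLength (B.dualSubmodule Y) (B.dualSubmodule X) = relLength X Y := by
  have := isLattice_dualSubmodule_s10 hB X
  have := isLattice_dualSubmodule_s10 hB Y
  refine le_antisymm ?_ (relLength_le_relLength_dualSubmodule hB hs hXY)
  simpa only [dualSubmodule_dualSubmodule_of_isLattice hB hs] using
    relLength_le_relLength_dualSubmodule hB hs (dualSubmodule_antitone B hXY)

lemma relLength_self_dualSubmodule (hB : B.Nondegenerate) (hs : B.IsSymm) [IsLattice K A]
    (hAL : A ≤ L) (hL : L ≤ B.dualSubmodule L) :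
    relLength A (B.dualSubmodule A) =
      relLength A L + relLength L (B.dualSubmodule L) + relLength A L := by
  have hLA : B.dualSubmodule L ≤ B.dualSubmodule A := dualSubmodule_antitone B hAL
  have := isLattice_dualSubmodule_s10 hB A
  have : IsLattice K L := isLattice_of_le_of_le_s10 hAL (hL.trans hLA)
  calc relLength A (B.dualSubmodule A)
      = relLength A L + relLength L (B.dualSubmodule L) +
          relLength (B.dualSubmodule L) (B.dualSubmodule A) := by
        rw [relLength_add_relLength hAL hL, relLength_add_relLength (hAL.trans hL) hLA]
    _ = _ := by rw [relLength_dualSubmodule hB hs hAL]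

lemma dualSubmodule_eq_self_of_relLength_eq (hB : B.Nondegenerate) (hs : B.IsSymm) [IsLattice K A]
    (hAL₀ : A ≤ L₀) (hL₀ : B.dualSubmodule L₀ = L₀) (hAL : A ≤ L) (hL : L ≤ B.dualSubmodule L)
    (hlen : relLength A L = relLength A L₀) (hfin : relLength A L₀ ≠ ⊤) :
    B.dualSubmodule L = L := by
  have length_eq : relLength A L₀ + relLength L (B.dualSubmodule L) + relLength A L₀ =
      relLength A L₀ + 0 + relLength A L₀ := by
    rw [← hlen, ← relLength_self_dualSubmodule hB hs hAL hL, hlen]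
    simpa only [hL₀, relLength_self] using relLength_self_dualSubmodule hB hs hAL₀ hL₀.ge
  have length_eq_zero : relLength L (B.dualSubmodule L) = 0 :=
    ENat.add_right_injective_of_ne_top hfin (ENat.add_left_injective_of_ne_top hfin length_eq)
  exact (le_of_relLength_eq_zero length_eq_zero).antisymm hL

variable (K) in
lemma relLength_smul_self_of_isLattice (c : R) (L : Submodule R V) [IsLattice K L] :
    relLength (c • L) L = Ring.ord R c * Module.finrank K V := by
  rw [relLength_smul_self, Module.finrank, IsLattice.rank' K L, ← Module.finrank, mul_comm]

theorem statement10_general (hB : B.Nondegenerate) (hs : B.IsSymm)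
    (hfg : L₀.FG) (hspan : span K (L₀ : Set V) = ⊤)
    (hself : {x : V | ∀ y ∈ L₀, B x y ∈ (algebraMap R K).range} = (L₀ : Set V))
    {c : R} (hc : c ≠ 0) (hcL : c • L₀ ≤ L)
    (hlen : modLength R (L.map (c • L₀).mkQ) = (Ring.ord R c * Module.finrank K V : ℕ∞))
    (hint : ∀ x ∈ L, ∀ y ∈ L, B x y ∈ (algebraMap R K).range) :
    {x : V | ∀ y ∈ L, B x y ∈ (algebraMap R K).range} = (L : Set V) := by
  have : IsLattice K L₀ := ⟨hfg, hspan⟩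
  have := isLattice_smul_s10 (L := L₀) hc
  have length_L₀ := relLength_smul_self_of_isLattice K c L₀
  have length_L : relLength (c • L₀) L = Ring.ord R c * Module.finrank K V :=
    WithBot.coe_injective ((Module.coe_length ..).trans hlen)
  have length_ne_top : relLength (c • L₀) L₀ ≠ ⊤ := by
    rw [length_L₀]
    exact WithTop.mul_ne_top (Ring.ord_ne_top (mem_nonZeroDivisors_of_ne_zero hc))
      (ENat.natCast_ne_top _)
  rw [← coe_dualSubmodule_s10, SetLike.coe_set_eq] at hself ⊢
  have L_le_dual : L ≤ B.dualSubmodule L := fun x hx y hy ↦ mem_one.2 (hint x hx y hy)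
  exact dualSubmodule_eq_self_of_relLength_eq hB hs (smul_le_self_of_tower c L₀) hself hcL
    L_le_dual (length_L.trans length_L₀.symm) length_ne_top

end DualLattice

theorem statement10
    (p : ℕ) [Fact p.Prime]
    (k : Type*) [Field k] [IsAlgClosed k] [CharP k p]
    (K : Type*) [Field K] [Algebra (WittVector p k) K] [IsFractionRing (WittVector p k) K]
    (𝔤 : Type*) [LieRing 𝔤] [LieAlgebra K 𝔤] [FiniteDimensional K 𝔤]
    [Module (WittVector p k) 𝔤] [IsScalarTower (WittVector p k) K 𝔤]
    (hnd : (killingForm K 𝔤).Nondegenerate)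
    (L₀ : Submodule (WittVector p k) 𝔤) (hfg : L₀.FG)
    (hspan : Submodule.span K (L₀ : Set 𝔤) = ⊤)
    (hbr : ∀ x ∈ L₀, ∀ y ∈ L₀, ⁅x, y⁆ ∈ L₀)
    (hself : {x : 𝔤 | ∀ y ∈ L₀, killingForm K 𝔤 x y ∈ (algebraMap (WittVector p k) K).range}
      = (L₀ : Set 𝔤))
    (n : ℕ) (L : Submodule (WittVector p k) 𝔤)
    (hL1 : (p : WittVector p k) ^ n • L₀ ≤ L)
    (hL2 : L ≤ L₀.comap (LinearMap.lsmul (WittVector p k) 𝔤 ((p : WittVector p k) ^ n)))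
    (hlen : modLength (WittVector p k) ↥(Submodule.map ((p : WittVector p k) ^ n • L₀).mkQ L)
      = (n * Module.finrank K 𝔤 : ℕ))
    (hint : ∀ x ∈ L, ∀ y ∈ L,
      killingForm K 𝔤 x y ∈ (algebraMap (WittVector p k) K).range) :
    {x : 𝔤 | ∀ y ∈ L, killingForm K 𝔤 x y ∈ (algebraMap (WittVector p k) K).range}
      = (L : Set 𝔤) := by
  have irreducible_p := WittVector.irreducible (k := k) p
  exact statement10_general hnd ⟨LieModule.traceForm_comm K 𝔤 𝔤⟩ hfg hspan hself
    (pow_ne_zero n irreducible_p.ne_zero) hL1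
    (by simpa [IsDiscreteValuationRing.addVal_uniformizer irreducible_p] using hlen) hint
end
end
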